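/- arXiv:2201.11082 — 4 statements merged into one kernel-verified Lean document; each statement's English description precedes it below -/
import Mathlib

section
/- For every finite simple graph G with a linear order ≤ on its vertex set V, every r ∈ ℕ, and all vertices u, v ∈ V, the set wreach_r[u] ∩ wreach_r[v] r-separates u and v in G. -/
open SimpleGraph

variable {V : Type*}

/-- `u ∈ wreach G r v` iff `u` is weakly `r`-reachable from `v`:
there is a path of length at most `r` from `v` to `u` on which `u` is the `≤`-least vertex. -/
def wreach [LinearOrder V] (G : SimpleGraph V) (r : ℕ) (v : V) : Set V :=
  {u | ∃ p : G.Walk v u, p.IsPath ∧ p.length ≤ r ∧ ∀ w ∈ p.support, u ≤ w}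

/-- `S` r-separates `u` and `v` in `G`: every path of length at most `r`
from `u` to `v` contains a vertex of `S`. -/
def Separates (G : SimpleGraph V) (r : ℕ) (S : Set V) (u v : V) : Prop :=
  ∀ p : G.Walk u v, p.IsPath → p.length ≤ r → ∃ w ∈ p.support, w ∈ S

section WeakReachability

variable [LinearOrder V] {G : SimpleGraph V} {r : ℕ} {u v w : V}

theorem mem_wreach_of_walk (p : G.Walk v u) (hr : p.length ≤ r) (hu : ∀ x ∈ p.support, u ≤ x) :
    u ∈ wreach G r v :=
  ⟨p.bypass, p.bypass_isPath, p.length_bypass_le_length.trans hr,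
    fun x hx => hu x (p.support_bypass_subset_support hx)⟩

theorem mem_wreach_of_isLeast_support {p : G.Walk u v} (hr : p.length ≤ r)
    (hw : IsLeast {x | x ∈ p.support} w) : w ∈ wreach G r u :=
  mem_wreach_of_walk (p.takeUntil w hw.1) ((p.length_takeUntil_le_length hw.1).trans hr)
    fun _ hx => hw.2 (p.support_takeUntil_subset_support hw.1 hx)

theorem statement0_general (p : G.Walk u v) (hr : p.length ≤ r) :
    ∃ w ∈ p.support, w ∈ wreach G r u ∩ wreach G r v := by
  obtain ⟨w, hw⟩ : ∃ w, IsLeast {x | x ∈ p.support} w :=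
    Set.exists_min_image _ id p.support.finite_toSet p.support_nonempty
  have hw_reverse : IsLeast {x | x ∈ p.reverse.support} w := by
    simpa only [Walk.support_reverse, List.mem_reverse] using hw
  exact ⟨w, hw.1, mem_wreach_of_isLeast_support hr hw,
    mem_wreach_of_isLeast_support (p.length_reverse.trans_le hr) hw_reverse⟩

end WeakReachability

theorem statement0 [Fintype V] [LinearOrder V] (G : SimpleGraph V) (r : ℕ) (u v : V) :
    Separates G r (wreach G r u ∩ wreach G r v) u v :=
  fun p _ hr => statement0_general p hr
end

section
/- For every finite simple graph G with a linear order ≤ on its vertex set V, every r ∈ ℕ, every vertex u ∈ V, and all v, v' ∈ wreach_r[u]: v ≤ v' if and only if v ∈ wreach_{2r}[v']. -/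
open SimpleGraph

variable {V : Type*}

section WeakReachability

variable [LinearOrder V] {G : SimpleGraph V} {r s : ℕ} {u v v' : V}

theorem mem_wreach_iff_exists_walk :
    u ∈ wreach G r v ↔ ∃ p : G.Walk v u, p.length ≤ r ∧ ∀ w ∈ p.support, u ≤ w := by
  constructor
  · rintro ⟨p, -, hp_length, hp_min⟩
    exact ⟨p, hp_length, hp_min⟩
  · rintro ⟨p, hp_length, hp_min⟩
    exact ⟨p.bypass, p.bypass_isPath, p.length_bypass_le_length.trans hp_length,
      fun w hw ↦ hp_min w (p.support_bypass_subset_support hw)⟩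

theorem le_of_mem_wreach (hu : u ∈ wreach G r v) : u ≤ v := by
  obtain ⟨p, -, -, hp_min⟩ := hu
  exact hp_min v p.start_mem_support

theorem mem_wreach_add_of_le (hv : v ∈ wreach G r u) (hv' : v' ∈ wreach G s u) (hle : v ≤ v') :
    v ∈ wreach G (r + s) v' := by
  obtain ⟨p, hp_length, hp_min⟩ := mem_wreach_iff_exists_walk.mp hv
  obtain ⟨q, hq_length, hq_min⟩ := mem_wreach_iff_exists_walk.mp hv'
  refine mem_wreach_iff_exists_walk.mpr ⟨q.reverse.append p, ?_, fun w hw ↦ ?_⟩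
  · calc
      (q.reverse.append p).length = p.length + q.length := by
        rw [Walk.length_append, Walk.length_reverse, add_comm]
      _ ≤ r + s := add_le_add hp_length hq_length
  · rw [Walk.mem_support_append_iff, Walk.support_reverse, List.mem_reverse] at hw
    rcases hw with hwq | hwp
    · exact hle.trans (hq_min w hwq)
    · exact hp_min w hwp

theorem statement1_general (hv : v ∈ wreach G r u) (hv' : v' ∈ wreach G s u) :
    v ≤ v' ↔ v ∈ wreach G (r + s) v' :=
  ⟨mem_wreach_add_of_le hv hv', le_of_mem_wreach⟩

end WeakReachability

theorem statement1 [Fintype V] [LinearOrder V] (G : SimpleGraph V) (r : ℕ) (u v v' : V)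
    (hv : v ∈ wreach G r u) (hv' : v' ∈ wreach G r u) :
    v ≤ v' ↔ v ∈ wreach G (2 * r) v' := by
  rw [two_mul]
  exact statement1_general hv hv'
end

section
/- Let u, v ∈ V, let d := wcol_r(G, ≤), and let i be the largest index in {0, 1, …, d} such that i = 0, or max first_i(u) occurs as an entry of first_i(v), or max first_i(v) occurs as an entry of first_i(u). Then every vertex w ∈ wreach_r[u] ∩ wreach_r[v] occurs as an entry of both first_i(u) and first_i(v). -/
open SimpleGraph

variable {V : Type*}

/-- The weak `r`-coloring number of `(G, ≤)`: the maximum of `|wreach_r[v]|` over `v`. -/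
noncomputable def wcol [LinearOrder V] (G : SimpleGraph V) (r : ℕ) : ℕ :=
  sSup (Set.range fun v => (wreach G r v).ncard)

/-- `firstSeq G r i v`: the sequence consisting of the `i` smallest elements of
`wreach G r v` in increasing order, padded at the end with `v` to have length exactly `i`. -/
noncomputable def firstSeq [Fintype V] [LinearOrder V] (G : SimpleGraph V) (r i : ℕ)
    (v : V) : List V :=
  let l := ((Set.toFinite (wreach G r v)).toFinset.sort (· ≤ ·)).take i
  l ++ List.replicate (i - l.length) v

/-- The `≤`-greatest entry of a nonempty list (junk value on the empty list). -/
noncomputable def listMax [LinearOrder V] [Nonempty V] : List V → V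
  | [] => Classical.arbitrary V
  | a :: as => as.foldr max a

/-
Give a common element `w` its position `a` in the increasing enumeration of `wreach_r[u]` and `b`
in that of `wreach_r[v]`. If `a ≤ b`, then `w` is the greatest entry of `first_b(v)` and already
occurs in `first_b(u)`, so `b` is an admissible index; hence `a ≤ b ≤ i`. The case `b ≤ a` is
symmetric.
-/

theorem isGreatest_foldr_max {α : Type*} [LinearOrder α] (a : α) (as : List α) :
    IsGreatest {x | x ∈ a :: as} (as.foldr max a) := by
  induction as with
  | nil => simp
  | cons b bs ih =>
    have hset : {x | x ∈ a :: b :: bs} = insert b {x | x ∈ a :: bs} := by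
      ext x
      simp only [List.mem_cons, Set.mem_ofPred_eq, Set.mem_insert_iff]
      tauto
    simpa only [hset, List.foldr_cons] using ih.insert b

theorem listMax_eq_of_isGreatest {α : Type*} [LinearOrder α] [Nonempty α] {l : List α} {w : α}
    (hw : IsGreatest {x | x ∈ l} w) : listMax l = w := by
  cases l with
  | nil => exact absurd hw.1 List.not_mem_nil
  | cons a as => exact (isGreatest_foldr_max a as).unique hw

theorem isGreatest_take_idxOf_succ {α : Type*} [LinearOrder α] {l : List α} (hl : l.SortedLE)
    {w : α} (hw : w ∈ l) : IsGreatest {x | x ∈ l.take (l.idxOf w + 1)} w := by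
  refine ⟨(List.mem_take_iff_idxOf_lt hw).2 (Nat.lt_succ_self _), fun x hx => ?_⟩
  have hxl : x ∈ l := List.mem_of_mem_take hx
  have hidx : l.idxOf x ≤ l.idxOf w := Nat.le_of_lt_succ ((List.mem_take_iff_idxOf_lt hxl).1 hx)
  simpa only [List.getElem_idxOf] using
    hl.getElem_le_getElem_of_le (hi := List.idxOf_lt_length_of_mem hxl)
      (hj := List.idxOf_lt_length_of_mem hw) hidx

theorem ncard_wreach_le_wcol [Finite V] [LinearOrder V] (G : SimpleGraph V) (r : ℕ) (v : V) :
    (wreach G r v).ncard ≤ wcol G r :=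
  le_csSup (Set.finite_range _).bddAbove (Set.mem_range_self v)

section SortedWreach

variable [Fintype V] [LinearOrder V] (G : SimpleGraph V) (r : ℕ) (v : V)

/-- The increasing enumeration of `wreach G r v`, of which `firstSeq G r i v` is a padded
initial segment. -/
noncomputable def sortedWreach : List V :=
  (Set.toFinite (wreach G r v)).toFinset.sort (· ≤ ·)

/-- The position of `w` in the increasing enumeration of `wreach G r v`, counted from `1` so that
it is the least `i` for which `w` is one of the `i` smallest elements.
For `w ∉ wreach G r v` it is the junk value `(wreach G r v).ncard + 1`. -/
noncomputable def wreachRank (w : V) : ℕ :=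
  (sortedWreach G r v).idxOf w + 1

theorem sortedLE_sortedWreach : (sortedWreach G r v).SortedLE :=
  (Finset.pairwise_sort _ _).sortedLE

theorem length_sortedWreach : (sortedWreach G r v).length = (wreach G r v).ncard := by
  rw [sortedWreach, Finset.length_sort, Set.ncard_eq_toFinset_card]

variable {G r v} {i : ℕ} {w : V}

theorem mem_sortedWreach : w ∈ sortedWreach G r v ↔ w ∈ wreach G r v := by
  rw [sortedWreach, Finset.mem_sort, Set.Finite.mem_toFinset]

theorem firstSeq_eq_take (hi : i ≤ (wreach G r v).ncard) :
    firstSeq G r i v = (sortedWreach G r v).take i := by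
  have hlen : ((sortedWreach G r v).take i).length = i :=
    List.length_take_of_le (hi.trans_eq (length_sortedWreach G r v).symm)
  change (sortedWreach G r v).take i ++
    List.replicate (i - ((sortedWreach G r v).take i).length) v = _
  rw [hlen, Nat.sub_self, List.replicate_zero, List.append_nil]

theorem wreachRank_le_ncard (hw : w ∈ wreach G r v) :
    wreachRank G r v w ≤ (wreach G r v).ncard := by
  rw [← length_sortedWreach]
  exact List.idxOf_lt_length_of_mem (mem_sortedWreach.2 hw)

theorem mem_firstSeq_of_wreachRank_le (hw : w ∈ wreach G r v) (hi : wreachRank G r v w ≤ i) :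
    w ∈ firstSeq G r i v :=
  List.mem_append_left _ ((List.mem_take_iff_idxOf_lt (mem_sortedWreach.2 hw)).2 hi)

theorem listMax_firstSeq_wreachRank [Nonempty V] (hw : w ∈ wreach G r v) :
    listMax (firstSeq G r (wreachRank G r v w) v) = w := by
  rw [firstSeq_eq_take (wreachRank_le_ncard hw)]
  exact listMax_eq_of_isGreatest
    (isGreatest_take_idxOf_succ (sortedLE_sortedWreach G r v) (mem_sortedWreach.2 hw))

theorem listMax_firstSeq_wreachRank_mem_firstSeq [Nonempty V] {u : V} (hu : w ∈ wreach G r u)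
    (hv : w ∈ wreach G r v) (huv : wreachRank G r u w ≤ wreachRank G r v w) :
    listMax (firstSeq G r (wreachRank G r v w) v) ∈ firstSeq G r (wreachRank G r v w) u := by
  rw [listMax_firstSeq_wreachRank hv]
  exact mem_firstSeq_of_wreachRank_le hu huv

theorem wreachRank_le_wcol (hw : w ∈ wreach G r v) : wreachRank G r v w ≤ wcol G r :=
  (wreachRank_le_ncard hw).trans (ncard_wreach_le_wcol G r v)

end SortedWreach

theorem statement2 [Fintype V] [LinearOrder V] [Nonempty V] (G : SimpleGraph V) (r : ℕ)
    (u v : V) (i : ℕ) (hid : i ≤ wcol G r)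
    (hcond : i = 0 ∨ listMax (firstSeq G r i u) ∈ firstSeq G r i v ∨
      listMax (firstSeq G r i v) ∈ firstSeq G r i u)
    (hmax : ∀ j, j ≤ wcol G r →
      (j = 0 ∨ listMax (firstSeq G r j u) ∈ firstSeq G r j v ∨
        listMax (firstSeq G r j v) ∈ firstSeq G r j u) → j ≤ i)
    (w : V) (hw : w ∈ wreach G r u ∩ wreach G r v) :
    w ∈ firstSeq G r i u ∧ w ∈ firstSeq G r i v := by
  obtain ⟨hu, hv⟩ := hw
  suffices hrank : wreachRank G r u w ≤ i ∧ wreachRank G r v w ≤ i from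
    ⟨mem_firstSeq_of_wreachRank_le hu hrank.1, mem_firstSeq_of_wreachRank_le hv hrank.2⟩
  rcases le_total (wreachRank G r u w) (wreachRank G r v w) with huv | hvu
  · have hvi : wreachRank G r v w ≤ i := hmax _ (wreachRank_le_wcol hv)
      (.inr (.inr (listMax_firstSeq_wreachRank_mem_firstSeq hu hv huv)))
    exact ⟨huv.trans hvi, hvi⟩
  · have hui : wreachRank G r u w ≤ i := hmax _ (wreachRank_le_wcol hu)
      (.inr (.inl (listMax_firstSeq_wreachRank_mem_firstSeq hv hu hvu)))
    exact ⟨hui, hvu.trans hui⟩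
end

section
/- Assume additionally that N, s ∈ ℕ with s ≥ 1 are such that for every set A ⊆ V with |A| ≥ N there exist a set S ⊆ V with |S| < s and a set I ⊆ A ∖ S with |I| ≥ 2s such that any two distinct vertices of I are at distance greater than 2r in the graph G − S. Then ℓ < N. -/
/-!
Each walk `π i k` avoids `S^{i-1}`, which contains every walk whose two indices are less than `i`.
Hence the `m i` are distinct, and `π i j`, `π k l` are disjoint whenever `j < k`. If `N ≤ ℓ`,
quasi-wideness applied to the `m i` yields `2 * s` indices any two of which are joined by a walk
meeting a set `S` with fewer than `s` elements. Pairing consecutive indices gives `s` pairwise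
disjoint walks, each of them meeting `S`: a contradiction.
-/

open SimpleGraph

variable {V : Type*}

/-- `Sk G m π k = S^k`: the union of the vertex sets of the paths `π i j` for
`1 ≤ i ≤ j ≤ k`. -/
def Sk (G : SimpleGraph V) (m : ℕ → V) (π : ∀ i j : ℕ, G.Walk (m i) (m j)) (k : ℕ) :
    Set V :=
  {w | ∃ i j : ℕ, 1 ≤ i ∧ i ≤ j ∧ j ≤ k ∧ w ∈ (π i j).support}

/-- Quasi-wideness of `G` at distance `d`, for fixed bounds: in every finite set of at least `N`
vertices there are `p` vertices that are pairwise at distance greater than `d` after the deletion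
of fewer than `s` vertices. Finiteness is explicit because `Set.ncard` is `0` on infinite sets. -/
def IsQuasiWide (G : SimpleGraph V) (d N s p : ℕ) : Prop :=
  ∀ A : Set V, A.Finite → N ≤ A.ncard →
    ∃ S : Set V, S.Finite ∧ S.ncard < s ∧
      ∃ I ⊆ A \ S, p ≤ I.ncard ∧ I.Pairwise (Separates G d S)

/-- Condition (iii) on the walks `π i k` with `1 ≤ i ≤ k ≤ ℓ`: each of them lies in
`G_i = G - S^{i-1}`. -/
def AvoidsEarlier (G : SimpleGraph V) (m : ℕ → V) (π : ∀ i j : ℕ, G.Walk (m i) (m j)) (ℓ : ℕ) :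
    Prop :=
  ∀ i k : ℕ, 1 ≤ i → i ≤ k → k ≤ ℓ → ∀ w ∈ (π i k).support, w ∉ Sk G m π (i - 1)

theorem Separates.exists_mem_support {G : SimpleGraph V} {d : ℕ} {S : Set V} {u v : V}
    (h : Separates G d S u v) (p : G.Walk u v) (hp : p.length ≤ d) : ∃ x ∈ p.support, x ∈ S := by
  classical
  obtain ⟨x, hx, hxS⟩ := h p.bypass p.bypass_isPath (p.length_bypass_le_length.trans hp)
  exact ⟨x, p.support_bypass_subset_support hx, hxS⟩

theorem card_le_ncard_of_pairwise_disjoint_of_inter_nonempty {ι α : Type*} {P : ι → Set α}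
    {S : Set α} (hS : S.Finite) (hP : Pairwise (Function.onFun Disjoint P))
    (hPS : ∀ t, (P t ∩ S).Nonempty) : Nat.card ι ≤ S.ncard := by
  choose f hf using hPS
  have f_injective : Function.Injective f := fun t u h ↦
    hP.eq (Set.not_disjoint_iff.2 ⟨f t, (hf t).1, h ▸ (hf u).1⟩)
  calc Nat.card ι = (Set.range f).ncard := (Set.ncard_range_of_injective f_injective).symm
    _ ≤ S.ncard := Set.ncard_le_ncard (Set.range_subset_iff.2 fun t ↦ (hf t).2) hS

theorem exists_lt_lt_of_two_mul_le_card {α : Type*} [LinearOrder α] {T : Finset α} {s : ℕ}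
    (hT : 2 * s ≤ T.card) :
    ∃ a b : Fin s → α, (∀ t, a t ∈ T) ∧ (∀ t, b t ∈ T) ∧ (∀ t, a t < b t) ∧
      ∀ t u, t < u → b t < a u := by
  let e := T.orderEmbOfFin rfl
  refine ⟨fun t ↦ e ⟨2 * t, by lia⟩, fun t ↦ e ⟨2 * t + 1, by lia⟩,
    fun t ↦ T.orderEmbOfFin_mem rfl _, fun t ↦ T.orderEmbOfFin_mem rfl _,
    fun t ↦ e.strictMono ?_, fun t u htu ↦ e.strictMono ?_⟩
  · exact Fin.mk_lt_mk.2 (by lia)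
  · exact Fin.mk_lt_mk.2 (by lia)

namespace AvoidsEarlier

variable {G : SimpleGraph V} {m : ℕ → V} {π : ∀ i j : ℕ, G.Walk (m i) (m j)} {ℓ : ℕ}

theorem disjoint_support (h : AvoidsEarlier G m π ℓ) {i j k l : ℕ} (hi : 1 ≤ i) (hij : i ≤ j)
    (hjk : j < k) (hkl : k ≤ l) (hl : l ≤ ℓ) :
    Disjoint {w | w ∈ (π i j).support} {w | w ∈ (π k l).support} :=
  Set.disjoint_left.2 fun w hw hw' ↦
    h k l (by lia) hkl hl w hw' ⟨i, j, hi, hij, by lia, hw⟩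

theorem injOn (h : AvoidsEarlier G m π ℓ) : Set.InjOn m (Set.Icc 1 ℓ) := by
  have ne_of_lt {i k : ℕ} (hi : 1 ≤ i) (hik : i < k) (hk : k ≤ ℓ) : m i ≠ m k :=
    (h.disjoint_support hi le_rfl hik le_rfl hk).ne_of_mem
      (π i i).start_mem_support (π k k).start_mem_support
  intro i hi k hk hik
  rcases lt_trichotomy i k with hlt | heq | hgt
  · exact absurd hik (ne_of_lt hi.1 hlt hk.2)
  · exact heq
  · exact absurd hik.symm (ne_of_lt hk.1 hgt hi.2)

theorem le_ncard_of_forall_lt_exists_mem_support (h : AvoidsEarlier G m π ℓ) {T : Finset ℕ}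
    (hTℓ : (T : Set ℕ) ⊆ Set.Icc 1 ℓ) {s : ℕ} (hT : 2 * s ≤ T.card) {S : Set V} (hS : S.Finite)
    (hTS : ∀ i ∈ T, ∀ j ∈ T, i < j → ∃ x ∈ (π i j).support, x ∈ S) : s ≤ S.ncard := by
  obtain ⟨a, b, ha, hb, hab, hba⟩ := exists_lt_lt_of_two_mul_le_card hT
  have walks_disjoint :
      Pairwise (Function.onFun Disjoint fun t ↦ {w | w ∈ (π (a t) (b t)).support}) :=
    (pairwise_disjoint_on _).2 fun t u htu ↦
      h.disjoint_support (hTℓ (ha t)).1 (hab t).le (hba t u htu) (hab u).le (hTℓ (hb u)).2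
  simpa only [Nat.card_fin] using
    card_le_ncard_of_pairwise_disjoint_of_inter_nonempty hS walks_disjoint
      fun t ↦ hTS _ (ha t) _ (hb t) (hab t)

end AvoidsEarlier

theorem statement8_general (G : SimpleGraph V) (d ℓ : ℕ) (m : ℕ → V)
    (π : ∀ i j : ℕ, G.Walk (m i) (m j))
    (hlength : ∀ i j : ℕ, 1 ≤ i → i < j → j ≤ ℓ → (π i j).length ≤ d)
    (havoid : AvoidsEarlier G m π ℓ) (N s : ℕ) (hwide : IsQuasiWide G d N s (2 * s)) :
    ℓ < N := by
  by_contra! hNℓ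
  have N_le_ncard : N ≤ (m '' Set.Icc 1 ℓ).ncard := by
    simpa [havoid.injOn.ncard_image] using hNℓ
  obtain ⟨S, hS, hSs, I, hI, hIs, hsep⟩ := hwide _ (Set.toFinite _) N_le_ncard
  obtain ⟨T, hT, rfl⟩ := Set.subset_image_iff.1 (hI.trans Set.sdiff_subset)
  lift T to Finset ℕ using (Set.finite_Icc 1 ℓ).subset hT
  have two_mul_s_le_card : 2 * s ≤ T.card := by
    simpa only [Set.ncard_coe_finset] using hIs.trans (Set.ncard_image_le T.finite_toSet)
  have walks_meet_S : ∀ i ∈ T, ∀ j ∈ T, i < j → ∃ x ∈ (π i j).support, x ∈ S :=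
    fun i hi j hj hij ↦
      (hsep (Set.mem_image_of_mem m hi) (Set.mem_image_of_mem m hj)
        (havoid.injOn.ne (hT hi) (hT hj) hij.ne)).exists_mem_support
        (π i j) (hlength i j (hT hi).1 hij (hT hj).2)
  exact hSs.not_ge
    (havoid.le_ncard_of_forall_lt_exists_mem_support hT two_mul_s_le_card hS walks_meet_S)

theorem statement8 [Fintype V] [LinearOrder V] (G : SimpleGraph V) (r : ℕ) (hr : 1 ≤ r)
    (v : V) (ℓ : ℕ) (m : ℕ → V) (π : ∀ i j : ℕ, G.Walk (m i) (m j))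
    (hπ : ∀ i j : ℕ, 1 ≤ i → i ≤ j → j ≤ ℓ → (π i j).IsPath ∧ (π i j).length ≤ 2 * r)
    (hv : ∀ k : ℕ, 1 ≤ k → k ≤ ℓ → v ∉ Sk G m π (k - 1))
    (hm : ∀ k : ℕ, 1 ≤ k → k ≤ ℓ →
      (∃ p : G.Walk v (m k), p.IsPath ∧ p.length ≤ r ∧
        ∀ w ∈ p.support, w ∉ Sk G m π (k - 1)) ∧
      (∀ w : V, (∃ p : G.Walk v w, p.IsPath ∧ p.length ≤ r ∧
        ∀ x ∈ p.support, x ∉ Sk G m π (k - 1)) → m k ≤ w))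
    (hπk : ∀ i k : ℕ, 1 ≤ i → i ≤ k → k ≤ ℓ →
      ∀ w ∈ (π i k).support, w ∉ Sk G m π (i - 1))
    -- the additional uniform quasi-wideness assumption
    (N s : ℕ) (hs : 1 ≤ s)
    (hN : ∀ A : Set V, N ≤ A.ncard →
      ∃ S : Set V, S.ncard < s ∧ ∃ I : Set V, I ⊆ A \ S ∧ 2 * s ≤ I.ncard ∧
        ∀ u ∈ I, ∀ w ∈ I, u ≠ w →
          ∀ p : G.Walk u w, p.length ≤ 2 * r → ∃ x ∈ p.support, x ∈ S) :
    ℓ < N := by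
  refine statement8_general G (2 * r) ℓ m π (fun i j hi hij hj ↦ (hπ i j hi hij.le hj).2) hπk N s
    fun A _ hA ↦ ?_
  obtain ⟨S, hS, I, hI, hIs, hsep⟩ := hN A hA
  exact ⟨S, S.toFinite, hS, I, hI, hIs, fun u hu w hw huw p _ ↦ hsep u hu w hw huw p⟩
end
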